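/- arXiv:math/0612327 — 2 statements merged into one kernel-verified Lean document; each statement's English description precedes it below -/
import Mathlib

section
/- Let R be a commutative ring, M and N two R-modules, and n a natural number. There is an R-linear isomorphism between the n-th exterior power of the product module M × N and the direct sum, over pairs (p, q) of natural numbers with p + q = n, of the tensor products (⋀^p M) ⊗[R] (⋀^q N). -/
open scoped TensorProduct DirectSum

theorem clifford_map_mem_pow {R M N : Type*} [CommRing R] [AddCommGroup M] [Module R M]
    [AddCommGroup N] [Module R N] {Q₁ : QuadraticForm R M} {Q₂ : QuadraticForm R N}
    (f : Q₁ →qᵢ Q₂) (p : ℕ) (a : CliffordAlgebra Q₁)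
    (ha : a ∈ (LinearMap.range (CliffordAlgebra.ι Q₁)) ^ p) :
    CliffordAlgebra.map f a ∈ (LinearMap.range (CliffordAlgebra.ι Q₂)) ^ p := by
  have h1 : CliffordAlgebra.map f a ∈
      ((LinearMap.range (CliffordAlgebra.ι Q₁)) ^ p).map
        (CliffordAlgebra.map f).toLinearMap := ⟨a, ha, rfl⟩
  rw [Submodule.map_pow] at h1
  refine pow_le_pow_left' (?_ : _ ≤ LinearMap.range (CliffordAlgebra.ι Q₂)) p h1
  rintro _ ⟨_, ⟨m, rfl⟩, rfl⟩
  exact ⟨f m, (CliffordAlgebra.map_apply_ι f m).symm⟩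

theorem clifford_prod_equiv {R M N : Type*} [CommRing R] [AddCommGroup M] [Module R M]
    [AddCommGroup N] [Module R N] (Q₁ : QuadraticForm R M) (Q₂ : QuadraticForm R N)
    (Q : QuadraticForm R (M × N)) (h : Q = Q₁.prod Q₂) :
    ∃ E : (CliffordAlgebra Q₁ ⊗[R] CliffordAlgebra Q₂) ≃ₗ[R] CliffordAlgebra Q,
      ∀ (p q : ℕ) (a : CliffordAlgebra Q₁) (b : CliffordAlgebra Q₂),
        a ∈ (LinearMap.range (CliffordAlgebra.ι Q₁)) ^ p →
        b ∈ (LinearMap.range (CliffordAlgebra.ι Q₂)) ^ q →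
        E (a ⊗ₜ b) ∈ (LinearMap.range (CliffordAlgebra.ι Q)) ^ (p + q) := by
  subst h
  refine ⟨(GradedTensorProduct.of R (CliffordAlgebra.evenOdd Q₁)
    (CliffordAlgebra.evenOdd Q₂)).trans (CliffordAlgebra.prodEquiv Q₁ Q₂).symm.toLinearEquiv, ?_⟩
  intro p q a b ha hb
  have : ((GradedTensorProduct.of R (CliffordAlgebra.evenOdd Q₁)
    (CliffordAlgebra.evenOdd Q₂)).trans
      (CliffordAlgebra.prodEquiv Q₁ Q₂).symm.toLinearEquiv) (a ⊗ₜ b) =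
      CliffordAlgebra.map (.inl Q₁ Q₂) a * CliffordAlgebra.map (.inr Q₁ Q₂) b := rfl
  rw [this, pow_add]
  exact Submodule.mul_mem_mul (clifford_map_mem_pow _ p a ha) (clifford_map_mem_pow _ q b hb)

theorem exterior_prod_equiv (R : Type*) [CommRing R] (M N : Type*)
    [AddCommGroup M] [Module R M] [AddCommGroup N] [Module R N] :
    ∃ E : (ExteriorAlgebra R M ⊗[R] ExteriorAlgebra R N) ≃ₗ[R] ExteriorAlgebra R (M × N),
      ∀ (p q : ℕ) (a : ⋀[R]^p M) (b : ⋀[R]^q N),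
        E ((a : ExteriorAlgebra R M) ⊗ₜ (b : ExteriorAlgebra R N)) ∈ ⋀[R]^(p + q) (M × N) := by
  obtain ⟨E, hE⟩ := clifford_prod_equiv (0 : QuadraticForm R M) (0 : QuadraticForm R N) 0
    (by ext x; simp)
  exact ⟨E, fun p q a b => hE p q a b a.2 b.2⟩

theorem total_equiv (R : Type*) [CommRing R] (M N : Type*)
    [AddCommGroup M] [Module R M] [AddCommGroup N] [Module R N] :
    ∃ T : (⨁ pq : ℕ × ℕ, (⋀[R]^pq.1 M) ⊗[R] (⋀[R]^pq.2 N)) ≃ₗ[R] ExteriorAlgebra R (M × N),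
      ∀ (pq : ℕ × ℕ) (t : (⋀[R]^pq.1 M) ⊗[R] (⋀[R]^pq.2 N)),
        T (DirectSum.lof R _ (fun pq : ℕ × ℕ => (⋀[R]^pq.1 M) ⊗[R] (⋀[R]^pq.2 N)) pq t) ∈
          ⋀[R]^(pq.1 + pq.2) (M × N) := by
  obtain ⟨E, hE⟩ := exterior_prod_equiv R M N
  let dM := (DirectSum.decomposeLinearEquiv (fun i : ℕ => ⋀[R]^i M))
  let dN := (DirectSum.decomposeLinearEquiv (fun i : ℕ => ⋀[R]^i N))
  let T := (TensorProduct.directSum R R (fun i : ℕ => ⋀[R]^i M) (fun i : ℕ => ⋀[R]^i N)).symm ≪≫ₗ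
    (TensorProduct.congr dM dN).symm ≪≫ₗ E
  refine ⟨T, ?_⟩
  rintro ⟨p, q⟩ t
  induction t using TensorProduct.induction_on with
  | zero => simp
  | add x y hx hy => rw [map_add, map_add]; exact add_mem hx hy
  | tmul a b =>
    have : T (DirectSum.lof R _ (fun pq : ℕ × ℕ => (⋀[R]^pq.1 M) ⊗[R] (⋀[R]^pq.2 N)) (p, q)
        (a ⊗ₜ b)) = E ((a : ExteriorAlgebra R M) ⊗ₜ (b : ExteriorAlgebra R N)) := by
      simp only [T, LinearEquiv.trans_apply]
      rw [TensorProduct.directSum_symm_lof_tmul, TensorProduct.congr_symm_tmul]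
      have h1 : dM.symm (DirectSum.lof R ℕ (fun i : ℕ => ⋀[R]^i M) p a) = a :=
        DirectSum.decompose_symm_of (fun i : ℕ => ⋀[R]^i M) a
      have h2 : dN.symm (DirectSum.lof R ℕ (fun i : ℕ => ⋀[R]^i N) q b) = b :=
        DirectSum.decompose_symm_of (fun i : ℕ => ⋀[R]^i N) b
      rw [h1, h2]
    rw [this]
    exact hE p q a b

theorem stmt8_aux {R : Type*} [CommRing R] {A : Type*} [AddCommGroup A] [Module R A]
    (𝒜 : ℕ → Submodule R A) [DirectSum.Decomposition 𝒜]
    {ι : Type*} [DecidableEq ι] (d : ι → ℕ) (X : ι → Type*)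
    [∀ i, AddCommGroup (X i)] [∀ i, Module R (X i)]
    (T : (⨁ i, X i) ≃ₗ[R] A)
    (hT : ∀ i x, T (DirectSum.lof R ι X i x) ∈ 𝒜 (d i)) (n : ℕ) :
    Nonempty (𝒜 n ≃ₗ[R] ⨁ i : {i : ι // d i = n}, X i.1) := by
  let φ : (⨁ i : {i : ι // d i = n}, X i.1) →ₗ[R] 𝒜 n :=
    DirectSum.toModule R _ _ fun i =>
      (T.toLinearMap ∘ₗ DirectSum.lof R ι X i.1).codRestrict (𝒜 n)
        (fun x => by have := hT i.1 x; rw [i.2] at this; exact this)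
  let proj : (⨁ i, X i) →ₗ[R] (⨁ i : {i : ι // d i = n}, X i.1) :=
    DirectSum.toModule R _ _ fun i =>
      if h : d i = n then DirectSum.lof R {i : ι // d i = n} (fun i => X i.1) ⟨i, h⟩ else 0
  have key : ∀ y, ((φ (proj y) : 𝒜 n) : A) = (DirectSum.decompose 𝒜 (T y) n : A) := by
    intro y
    induction y using DirectSum.induction_on with
    | zero => simp
    | add x y hx hy => simp [hx, hy]
    | of i x =>
      rw [← DirectSum.lof_eq_of R]
      by_cases h : d i = n
      · have h2 : T (DirectSum.lof R ι X i x) ∈ 𝒜 n := h ▸ hT i x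
        rw [DirectSum.decompose_of_mem_same _ h2]
        simp [φ, proj, h]
      · rw [DirectSum.decompose_of_mem_ne _ (hT i x) h]
        simp [proj, h]
  refine ⟨LinearEquiv.ofLinearMap (proj ∘ₗ T.symm.toLinearMap ∘ₗ (𝒜 n).subtype) φ ?_ ?_⟩
  · refine DirectSum.linearMap_ext R fun i => ?_
    ext x : 1
    simp [φ, proj, i.2]
  · ext x : 2
    simp [key]

/-- The `n`-th exterior power of a product module `M × N` is `R`-linearly isomorphic to the
direct sum, over pairs `(p, q)` with `p + q = n`, of `(⋀[R]^p M) ⊗[R] (⋀[R]^q N)`. -/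
theorem stmt8 (R : Type*) [CommRing R] (M N : Type*)
    [AddCommGroup M] [Module R M] [AddCommGroup N] [Module R N] (n : ℕ) :
    Nonempty ((⋀[R]^n (M × N)) ≃ₗ[R]
      DirectSum {pq : ℕ × ℕ // pq.1 + pq.2 = n}
        fun pq => TensorProduct R (⋀[R]^pq.1.1 M) (⋀[R]^pq.1.2 N)) := by
  obtain ⟨T, hT⟩ := total_equiv R M N
  exact stmt8_aux (fun i : ℕ => ⋀[R]^i (M × N)) (fun pq : ℕ × ℕ => pq.1 + pq.2)
    (fun pq : ℕ × ℕ => (⋀[R]^pq.1 M) ⊗[R] (⋀[R]^pq.2 N)) T hT n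
end

section
/- Let n be a natural number and G = Equiv.Perm (Fin n) the symmetric group. For every finite-dimensional complex representation V of G, the character of V, viewed as a function G → ℂ, lies in the ℤ-submodule of functions G → ℂ spanned by the permutation characters χ_H : g ↦ (the number of fixed points of g acting on the coset space G ⧸ H by left multiplication), where H ranges over all subgroups of G. -/
namespace YoungProof

open Finset

open scoped Classical in
/-- The Young subgroup preserving a coloring. -/
def yng {n : ℕ} {α : Type} (c : Fin n → α) : Subgroup (Equiv.Perm (Fin n)) where
  carrier := {σ | ∀ i, c (σ i) = c i}
  mul_mem' := by
    intro a b ha hb i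
    simp only [Set.mem_ofPred_eq] at ha hb
    rw [Equiv.Perm.mul_apply, ha, hb]
  one_mem' := by intro i; rfl
  inv_mem' := by
    intro a ha i
    simp only [Set.mem_ofPred_eq] at ha
    rw [← ha (a⁻¹ i)]; simp

theorem mem_yng {n : ℕ} {α : Type} {c : Fin n → α} {σ : Equiv.Perm (Fin n)} :
    σ ∈ yng c ↔ ∀ i, c (σ i) = c i := Iff.rfl

/-- sign as a complex number -/
noncomputable def sg {n : ℕ} (g : Equiv.Perm (Fin n)) : ℂ := ((Equiv.Perm.sign g : ℤ) : ℂ)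

theorem sg_mul {n : ℕ} (g h : Equiv.Perm (Fin n)) : sg (g * h) = sg g * sg h := by
  simp [sg]

theorem sg_one {n : ℕ} : sg (1 : Equiv.Perm (Fin n)) = 1 := by simp [sg]

theorem sg_ne {n : ℕ} (g : Equiv.Perm (Fin n)) : sg g ≠ 0 := by simp [sg]

theorem sg_conj {n : ℕ} (g h : Equiv.Perm (Fin n)) : sg (g * h * g⁻¹) = sg h := by
  rw [sg_mul, mul_comm, ← sg_mul, inv_mul_cancel_left]

open scoped Classical in
/-- multiplicity of the sign character of a Young subgroup. -/
noncomputable def ee {n : ℕ} {α : Type} (d : Fin n → α) :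
    (Equiv.Perm (Fin n) → ℂ) →ₗ[ℂ] ℂ :=
  (Nat.card (yng d) : ℂ)⁻¹ • ∑ g : Equiv.Perm (Fin n) with g ∈ yng d,
    sg g • LinearMap.proj g

open scoped Classical in
theorem ee_apply {n : ℕ} {α : Type} (d : Fin n → α) (f : Equiv.Perm (Fin n) → ℂ) :
    ee d f = (Nat.card (yng d) : ℂ)⁻¹ * ∑ g : Equiv.Perm (Fin n) with g ∈ yng d, sg g * f g := by
  simp [ee]

/-- Twist by sign, restricted. -/
noncomputable def twist {n : ℕ} {W : Type} [AddCommGroup W] [Module ℂ W]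
    (ρ : Representation ℂ (Equiv.Perm (Fin n)) W) (H : Subgroup (Equiv.Perm (Fin n))) :
    Representation ℂ H W where
  toFun h := sg (h : Equiv.Perm (Fin n)) • ρ h
  map_one' := by simp [sg_one]
  map_mul' a b := by
    ext v
    simp [sg_mul, smul_smul, mul_comm (sg (b : Equiv.Perm (Fin n)))]

theorem ee_int {n : ℕ} {α : Type} (d : Fin n → α) {W : Type} [AddCommGroup W] [Module ℂ W]
    [FiniteDimensional ℂ W] (ρ : Representation ℂ (Equiv.Perm (Fin n)) W) :
    ∃ z : ℤ, ee d ρ.character = z := by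
  classical
  have : Invertible (Nat.card (yng d) : ℂ) := invertibleOfNonzero (by
    exact_mod_cast Nat.card_pos.ne')
  have h := Representation.card_inv_mul_sum_char_eq_finrank (twist ρ (yng d))
  refine ⟨Module.finrank ℂ (twist ρ (yng d)).invariants, ?_⟩
  rw [ee_apply]
  push_cast
  rw [← h]
  congr 1
  rw [← Finset.sum_subtype_eq_sum_filter]
  simp only [Finset.subtype_univ]
  apply Finset.sum_congr
  · ext; simp
  · intro x _
    simp [Representation.character, twist]

/-- The permutation representation on functions. -/
noncomputable def prep {n : ℕ} (H : Subgroup (Equiv.Perm (Fin n))) :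
    Representation ℂ (Equiv.Perm (Fin n)) ((Equiv.Perm (Fin n) ⧸ H) → ℂ) where
  toFun g := LinearMap.funLeft ℂ ℂ (fun x => g⁻¹ • x)
  map_one' := by ext; simp [LinearMap.funLeft_apply]
  map_mul' a b := by
    apply LinearMap.ext; intro f; funext x
    simp [LinearMap.funLeft_apply, mul_smul]

/-- Permutation character -/
noncomputable def pc {n : ℕ} (H : Subgroup (Equiv.Perm (Fin n))) : Equiv.Perm (Fin n) → ℂ :=
  fun g => (Nat.card {x : Equiv.Perm (Fin n) ⧸ H // g • x = x} : ℂ)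

theorem prep_char {n : ℕ} (H : Subgroup (Equiv.Perm (Fin n))) :
    (prep H).character = pc H := by
  classical
  have := Fintype.ofFinite (Equiv.Perm (Fin n) ⧸ H)
  funext g
  rw [Representation.character, LinearMap.trace_eq_matrix_trace ℂ (Pi.basisFun ℂ _), Matrix.trace]
  simp only [Matrix.diag_apply, LinearMap.toMatrix_apply, pc]
  simp only [prep, MonoidHom.coe_mk, OneHom.coe_mk, Pi.basisFun_apply, Pi.basisFun_repr,
    LinearMap.funLeft_apply, Pi.single_apply]
  rw [Nat.card_eq_fintype_card, Fintype.card_subtype, Finset.sum_boole]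
  congr 2
  ext x
  simp only [Finset.mem_filter, Finset.mem_univ, true_and]
  rw [inv_smul_eq_iff, eq_comm]

/-- class function -/
def IsCl {n : ℕ} (f : Equiv.Perm (Fin n) → ℂ) : Prop := ∀ g h, f (h * g * h⁻¹) = f g

theorem pc_isCl {n : ℕ} (H : Subgroup (Equiv.Perm (Fin n))) : IsCl (pc H) := by
  rw [← prep_char]
  intro g h
  simp

open scoped Classical in
theorem pc_formula {n : ℕ} (H : Subgroup (Equiv.Perm (Fin n))) (h : Equiv.Perm (Fin n)) :
    (Nat.card H : ℂ) * pc H h = ∑ g : Equiv.Perm (Fin n), if g⁻¹ * h * g ∈ H then 1 else 0 := by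
  have := Fintype.ofFinite (Equiv.Perm (Fin n) ⧸ H)
  rw [Finset.sum_boole, pc]
  norm_cast
  have e1 : Nat.card {g : Equiv.Perm (Fin n) // g⁻¹ * h * g ∈ H}
      = Nat.card ({x : Equiv.Perm (Fin n) ⧸ H // h • x = x} × H) := by
    refine (Nat.card_congr ?_)
    refine Equiv.trans ?_ (QuotientGroup.preimageMkEquivSubgroupProdSet H
      {x : Equiv.Perm (Fin n) ⧸ H | h • x = x}) |>.trans (Equiv.prodComm _ _)
    refine Equiv.subtypeEquivRight ?_
    intro g
    simp only [Set.mem_preimage, Set.mem_ofPred_eq]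
    rw [MulAction.Quotient.smul_coe, eq_comm, QuotientGroup.eq, smul_eq_mul, mul_assoc]
  rw [Nat.card_prod, mul_comm] at e1
  rw [← e1, Nat.card_eq_fintype_card, Fintype.card_subtype]

open scoped Classical in
theorem sum_sg {n : ℕ} {α : Type} (c : Fin n → α) :
    (∑ g : Equiv.Perm (Fin n) with g ∈ yng c, sg g) = if Function.Injective c then 1 else 0 := by
  split_ifs with hc
  · rw [Finset.sum_eq_single 1]
    · exact sg_one
    · intro b hb hb1
      exfalso; apply hb1
      ext i
      simp only [Finset.mem_filter, Finset.mem_univ, true_and, mem_yng] at hb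
      rw [hc (hb i)]; rfl
    · intro h; exact absurd (by simp [one_mem]) h
  · simp only [Function.Injective, not_forall] at hc
    obtain ⟨i, j, hij, hne⟩ := hc
    have ht : Equiv.swap i j ∈ yng c := by
      intro k
      rcases eq_or_ne k i with rfl | h1
      · simp [hij]
      rcases eq_or_ne k j with rfl | h2
      · simp [hij]
      rw [Equiv.swap_apply_of_ne_of_ne h1 h2]
    have hs : sg (Equiv.swap i j) = -1 := by simp [sg, Equiv.Perm.sign_swap hne]
    have : (∑ g : Equiv.Perm (Fin n) with g ∈ yng c, sg g)
        = ∑ g : Equiv.Perm (Fin n) with g ∈ yng c, sg (Equiv.swap i j * g) := by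
      symm
      apply Finset.sum_bij (fun g _ => Equiv.swap i j * g)
      · intro a ha
        simp only [Finset.mem_filter, Finset.mem_univ, true_and] at ha ⊢
        exact mul_mem ht ha
      · intro a _ b _ hab
        exact mul_left_cancel hab
      · intro b hb
        simp only [Finset.mem_filter, Finset.mem_univ, true_and] at hb
        exact ⟨Equiv.swap i j * b, by simpa using mul_mem ht hb, by simp [← mul_assoc]⟩
      · intro a _; rfl
    simp only [sg_mul, hs, neg_mul, one_mul, Finset.sum_neg_distrib] at this
    exact self_eq_neg.mp this

open scoped Classical in
theorem ee_pc {n : ℕ} {α β : Type} (c : Fin n → α) (d : Fin n → β) :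
    (Nat.card (yng d) : ℂ) * (Nat.card (yng c) : ℂ) * ee d (pc (yng c)) =
      (#{g : Equiv.Perm (Fin n) | Function.Injective (fun i => (c (g i), d i))} : ℂ) := by
  have hd : (Nat.card (yng d) : ℂ) ≠ 0 := by exact_mod_cast Nat.card_pos.ne'
  rw [ee_apply]
  have : ∀ x y z : ℂ, x ≠ 0 → x * y * (x⁻¹ * z) = y * z := by
    intro x y z hx; field_simp
  rw [this _ _ _ hd, Finset.mul_sum]
  simp_rw [mul_left_comm _ (sg _), pc_formula, Finset.mul_sum]
  rw [Finset.sum_comm, ← Finset.sum_boole]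
  rw [← Equiv.sum_comp (Equiv.inv (Equiv.Perm (Fin n)))]
  apply Finset.sum_congr rfl
  intro g _
  refine Eq.trans ?_ ((sum_sg (fun i => (c (g i), d i))).trans (by congr))
  rw [Finset.sum_filter, Finset.sum_filter]
  apply Finset.sum_congr rfl
  intro h _
  rw [mul_ite, mul_one, mul_zero, ← ite_and]
  apply if_congr _ rfl rfl
  simp only [mem_yng, Equiv.inv_apply, inv_inv, Prod.mk.injEq, Equiv.Perm.mul_apply]
  constructor
  · rintro ⟨h1, h2⟩ i
    refine ⟨?_, h1 i⟩
    have := h2 (g i)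
    simpa using this
  · intro h1
    refine ⟨fun i => (h1 i).2, fun i => ?_⟩
    have := (h1 (g⁻¹ i)).1
    simpa using this

open scoped Classical in
theorem ee_zero {n : ℕ} {α β : Type} (c : Fin n → α) (d : Fin n → β)
    (h : ∀ g : Equiv.Perm (Fin n), ¬ Function.Injective (fun i => (c (g i), d i))) :
    ee d (pc (yng c)) = 0 := by
  have := ee_pc c d
  rw [Finset.filter_false_of_mem (fun g _ => h g)] at this
  have hd : (Nat.card (yng d) : ℂ) ≠ 0 := by exact_mod_cast Nat.card_pos.ne'
  have hc : (Nat.card (yng c) : ℂ) ≠ 0 := by exact_mod_cast Nat.card_pos.ne'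
  simpa [hd, hc] using this

open scoped Classical in
theorem ee_one {n : ℕ} {α β : Type} (c : Fin n → α) (d : Fin n → β)
    (h0 : Function.Injective (fun i => (c i, d i)))
    (h : ∀ g : Equiv.Perm (Fin n), Function.Injective (fun i => (c (g i), d i)) →
      ∃ k ∈ yng d, ∀ i, c (g i) = c (k i)) :
    ee d (pc (yng c)) = 1 := by
  have := ee_pc c d
  have hd : (Nat.card (yng d) : ℂ) ≠ 0 := by exact_mod_cast Nat.card_pos.ne'
  have hc : (Nat.card (yng c) : ℂ) ≠ 0 := by exact_mod_cast Nat.card_pos.ne'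
  have e : #{g : Equiv.Perm (Fin n) | Function.Injective (fun i => (c (g i), d i))}
      = Nat.card (yng d) * Nat.card (yng c) := by
    rw [← Nat.card_prod, ← Fintype.card_subtype, ← Nat.card_eq_fintype_card]
    symm
    refine Nat.card_eq_of_bijective (fun p : yng d × yng c => ⟨p.2.1 * p.1.1, ?_⟩) ⟨?_, ?_⟩
    · intro i j hij
      simp only [Prod.mk.injEq, Equiv.Perm.mul_apply] at hij
      have h1 := mem_yng.1 p.2.2
      have h2 := mem_yng.1 p.1.2
      rw [h1, h1, ← h2 i, ← h2 j] at hij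
      exact p.1.1.injective (h0 (Prod.ext hij.1 hij.2))
    · rintro ⟨⟨a, ha⟩, ⟨b, hb⟩⟩ ⟨⟨a', ha'⟩, ⟨b', hb'⟩⟩ hab
      replace hab := congrArg Subtype.val hab
      change b * a = b' * a' at hab
      have e1 : a = a' := by
        ext i
        have : a i = a' i := by
          apply h0
          refine Prod.ext ?_ ?_
          · have := congrArg c (congrArg (fun s : Equiv.Perm (Fin n) => s i) hab)
            simp only [Equiv.Perm.mul_apply] at this
            rwa [mem_yng.1 hb, mem_yng.1 hb'] at this
          · exact (mem_yng.1 ha i).trans (mem_yng.1 ha' i).symm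
        rw [this]
      subst e1
      have e2 : b = b' := mul_right_cancel hab
      subst e2
      rfl
    · rintro ⟨g, hg⟩
      obtain ⟨k, hk, hgk⟩ := h g hg
      refine ⟨⟨⟨k, hk⟩, ⟨g * k⁻¹, ?_⟩⟩, ?_⟩
      · intro i
        rw [Equiv.Perm.mul_apply, hgk]; simp
      · simp
  rw [e] at this
  push_cast at this
  have h3 : (Nat.card (yng d) : ℂ) * (Nat.card (yng c) : ℂ) ≠ 0 := mul_ne_zero hd hc
  exact mul_left_cancel₀ h3 (by rw [this, mul_one])

/-- fibre sizes -/
def mu {n : ℕ} (d : Fin n → Fin n) (b : Fin n) : ℕ := #{i | d i = b}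

/-- fibre sizes for ℕ-colorings -/
def lam {n : ℕ} (c : Fin n → ℕ) (a : ℕ) : ℕ := #{i | c i = a}

/-- colors of `c` in the `d`-fibre of `b` -/
def CC {n : ℕ} (c : Fin n → ℕ) (d : Fin n → Fin n) (b : Fin n) : Finset ℕ :=
  (Finset.univ.filter (fun i => d i = b)).image c

theorem mem_CC {n : ℕ} {c : Fin n → ℕ} {d : Fin n → Fin n} {b : Fin n} {a : ℕ} :
    a ∈ CC c d b ↔ ∃ i, d i = b ∧ c i = a := by simp [CC]

/-- number of monochromatic pairs -/
def QQ {n : ℕ} (c : Fin n → ℕ) : ℕ := #{p : Fin n × Fin n | c p.1 = c p.2}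

/-- the maximum possible number of pairs -/
def Qm {n : ℕ} (d : Fin n → Fin n) : ℕ :=
  ∑ p : Fin n × Fin n, min (mu d p.1) (mu d p.2)

theorem card_CC {n : ℕ} {c : Fin n → ℕ} {d : Fin n → Fin n}
    (h : Function.Injective (fun i => (c i, d i))) (b : Fin n) : #(CC c d b) = mu d b := by
  rw [CC, Finset.card_image_of_injOn, mu]
  intro i hi j hj hij
  simp at hi hj
  exact h (Prod.ext hij (hi.trans hj.symm))

theorem QQ_eq {n : ℕ} {c : Fin n → ℕ} {d : Fin n → Fin n}
    (h : Function.Injective (fun i => (c i, d i))) :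
    QQ c = ∑ p : Fin n × Fin n, #(CC c d p.1 ∩ CC c d p.2) := by
  rw [QQ, Finset.card_eq_sum_card_fiberwise (f := fun p => (d p.1, d p.2)) (t := Finset.univ)
    (fun _ _ => by simp)]
  apply Finset.sum_congr rfl
  rintro ⟨b, b'⟩ _
  apply Finset.card_bij (fun p _ => c p.1)
  · rintro ⟨i, j⟩ hij
    simp at hij
    simp only [Finset.mem_inter, mem_CC]
    exact ⟨⟨i, hij.2.1, rfl⟩, ⟨j, hij.2.2, hij.1.symm⟩⟩
  · rintro ⟨i, j⟩ hij ⟨i', j'⟩ hij' he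
    simp at hij hij' he
    refine Prod.ext (h (Prod.ext he (hij.2.1.trans hij'.2.1.symm)))
      (h (Prod.ext ?_ (hij.2.2.trans hij'.2.2.symm)))
    exact hij.1.symm.trans (he.trans hij'.1)
  · intro a ha
    simp only [Finset.mem_inter, mem_CC] at ha
    obtain ⟨⟨i, hi, hi'⟩, ⟨j, hj, hj'⟩⟩ := ha
    exact ⟨(i, j), by simp [hi, hj, hi', hj'], hi'⟩

theorem inter_le {n : ℕ} {c : Fin n → ℕ} {d : Fin n → Fin n}
    (h : Function.Injective (fun i => (c i, d i))) (b b' : Fin n) :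
    #(CC c d b ∩ CC c d b') ≤ min (mu d b) (mu d b') := by
  rw [← card_CC h, ← card_CC h]
  exact le_min (Finset.card_le_card Finset.inter_subset_left)
    (Finset.card_le_card Finset.inter_subset_right)

theorem QQ_le {n : ℕ} {c : Fin n → ℕ} {d : Fin n → Fin n}
    (h : Function.Injective (fun i => (c i, d i))) : QQ c ≤ Qm d := by
  rw [QQ_eq h, Qm]
  exact Finset.sum_le_sum (fun p _ => inter_le h _ _)

theorem nested {n : ℕ} {c : Fin n → ℕ} {d : Fin n → Fin n}
    (h : Function.Injective (fun i => (c i, d i))) (hQ : QQ c = Qm d) (b b' : Fin n) :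
    CC c d b ⊆ CC c d b' ∨ CC c d b' ⊆ CC c d b := by
  rw [QQ_eq h, Qm, Finset.sum_eq_sum_iff_of_le (fun p _ => inter_le h _ _)] at hQ
  have := hQ (b, b') (Finset.mem_univ _)
  simp only at this
  rw [← card_CC h, ← card_CC h] at this
  rcases le_total (#(CC c d b)) (#(CC c d b')) with hle | hle
  · left
    rw [min_eq_left hle] at this
    rw [← Finset.eq_of_subset_of_card_le Finset.inter_subset_left this.ge]
    exact Finset.inter_subset_right
  · right
    rw [min_eq_right hle] at this
    rw [← Finset.eq_of_subset_of_card_le Finset.inter_subset_right this.ge]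
    exact Finset.inter_subset_left

theorem lam_eq {n : ℕ} {c : Fin n → ℕ} {d : Fin n → Fin n}
    (h : Function.Injective (fun i => (c i, d i))) (a : ℕ) :
    lam c a = #{b | a ∈ CC c d b} := by
  rw [lam]
  apply Finset.card_bij (fun i _ => d i)
  · intro i hi
    simp at hi
    simp only [Finset.mem_filter, Finset.mem_univ, true_and, mem_CC]
    exact ⟨i, rfl, hi⟩
  · intro i hi j hj hij
    simp at hi hj
    exact h (Prod.ext (hi.trans hj.symm) hij)
  · intro b hb
    simp only [Finset.mem_filter, Finset.mem_univ, true_and, mem_CC] at hb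
    obtain ⟨i, hi, hi'⟩ := hb
    exact ⟨i, by simp [hi'], hi⟩

theorem lower_eq_range (S : Finset ℕ) (h : ∀ a ∈ S, ∀ a' ≤ a, a' ∈ S) : S = range #S := by
  apply Finset.eq_of_subset_of_card_le
  · intro a ha
    rw [Finset.mem_range]
    have : range (a + 1) ⊆ S := fun x hx => h a ha x (by simpa [Nat.lt_succ_iff] using hx)
    have := Finset.card_le_card this
    simp at this
    omega
  · simp

theorem CC_eq_range {n : ℕ} {c : Fin n → ℕ} {d : Fin n → Fin n}
    (h : Function.Injective (fun i => (c i, d i))) (hQ : QQ c = Qm d)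
    (hl : Antitone (lam c)) (b : Fin n) : CC c d b = range (mu d b) := by
  rw [← card_CC h]
  apply lower_eq_range
  intro a ha a' haa'
  by_contra hna
  have hle := hl haa'
  rw [lam_eq h, lam_eq h] at hle
  have : ∃ b', a' ∈ CC c d b' ∧ a ∉ CC c d b' := by
    by_contra hcon
    push Not at hcon
    have hsub : (Finset.univ.filter fun b => a' ∈ CC c d b) ⊆
        (Finset.univ.filter fun b => a ∈ CC c d b) := by
      intro x hx
      simp only [Finset.mem_filter, Finset.mem_univ, true_and] at hx ⊢
      exact hcon x hx
    have := Finset.eq_of_subset_of_card_le hsub hle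
    have hb : b ∈ Finset.univ.filter fun b => a ∈ CC c d b := by simp [ha]
    rw [← this] at hb
    simp at hb
    exact hna hb
  obtain ⟨b', h1, h2⟩ := this
  rcases nested h hQ b b' with h3 | h3
  · exact h2 (h3 ha)
  · exact hna (h3 h1)

/-- rank within the fibre -/
def rk {n : ℕ} (d : Fin n → Fin n) (i : Fin n) : ℕ := #{j | j < i ∧ d j = d i}

theorem rk_lt_rk {n : ℕ} (d : Fin n → Fin n) {i j : Fin n} (hij : i < j) (hd : d i = d j) :
    rk d i < rk d j := by
  apply Finset.card_lt_card
  rw [Finset.ssubset_iff_of_subset]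
  · exact ⟨i, by simp [hij, hd], by simp⟩
  · intro k hk
    simp at hk ⊢
    exact ⟨hk.1.trans hij, hk.2.trans hd⟩

theorem rk_inj {n : ℕ} (d : Fin n → Fin n) : Function.Injective (fun i => (rk d i, d i)) := by
  intro i j hij
  simp only [Prod.mk.injEq] at hij
  rcases lt_trichotomy i j with h | h | h
  · exact absurd hij.1 (rk_lt_rk d h hij.2).ne
  · exact h
  · exact absurd hij.1 (rk_lt_rk d h hij.2.symm).ne'

theorem CC_rk {n : ℕ} (d : Fin n → Fin n) (b : Fin n) : CC (rk d) d b = range (mu d b) := by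
  apply Finset.eq_of_subset_of_card_le
  · intro a ha
    rw [mem_CC] at ha
    obtain ⟨i, rfl, rfl⟩ := ha
    rw [Finset.mem_range]
    apply Finset.card_lt_card
    rw [Finset.ssubset_iff_of_subset]
    · exact ⟨i, by simp, by simp⟩
    · intro k hk
      simp at hk ⊢
      exact hk.2
  · rw [card_CC (rk_inj d)]; simp

theorem lam_rk {n : ℕ} (d : Fin n → Fin n) (a : ℕ) : lam (rk d) a = #{b | a < mu d b} := by
  rw [lam_eq (rk_inj d)]
  simp [CC_rk]

theorem lam_rk_anti {n : ℕ} (d : Fin n → Fin n) : Antitone (lam (rk d)) := by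
  intro a a' h
  rw [lam_rk, lam_rk]
  apply Finset.card_le_card
  intro b hb
  simp at hb ⊢
  omega

theorem QQ_rk {n : ℕ} (d : Fin n → Fin n) : QQ (rk d) = Qm d := by
  rw [QQ_eq (rk_inj d), Qm]
  apply Finset.sum_congr rfl
  intro p _
  rw [CC_rk, CC_rk]
  have : range (mu d p.1) ∩ range (mu d p.2) = range (min (mu d p.1) (mu d p.2)) := by
    ext; simp
  rw [this, Finset.card_range]

theorem lam_comp {n : ℕ} (c : Fin n → ℕ) (g : Equiv.Perm (Fin n)) :
    lam (fun i => c (g i)) = lam c := by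
  funext a
  apply Finset.card_bij (fun i _ => g i)
  · intro i hi; simpa using hi
  · intro i _ j _ hij; exact g.injective hij
  · intro i hi; exact ⟨g⁻¹ i, by simpa using hi, by simp⟩

theorem QQ_comp {n : ℕ} (c : Fin n → ℕ) (g : Equiv.Perm (Fin n)) :
    QQ (fun i => c (g i)) = QQ c := by
  apply Finset.card_bij (fun i _ => (g i.1, g i.2))
  · intro i hi; simpa using hi
  · intro i _ j _ hij
    simp at hij
    exact Prod.ext hij.1 hij.2
  · intro i hi; exact ⟨(g⁻¹ i.1, g⁻¹ i.2), by simpa using hi, by simp⟩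

theorem Qm_le {n : ℕ} {d d' : Fin n → Fin n} {g : Equiv.Perm (Fin n)}
    (h : Function.Injective (fun i => (rk d' (g i), d i))) : Qm d' ≤ Qm d := by
  rw [← QQ_rk d', ← QQ_comp _ g]
  exact QQ_le (c := fun i => rk d' (g i)) h

theorem CC_of_eq {n : ℕ} {d d' : Fin n → Fin n} {g : Equiv.Perm (Fin n)}
    (h : Function.Injective (fun i => (rk d' (g i), d i))) (hQ : Qm d' = Qm d) (b : Fin n) :
    CC (fun i => rk d' (g i)) d b = range (mu d b) := by
  apply CC_eq_range (c := fun i => rk d' (g i)) h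
  · rw [QQ_comp, QQ_rk, hQ]
  · rw [lam_comp]; exact lam_rk_anti d'

theorem anti_lower {n : ℕ} (m : Fin n → ℕ) (hm : Antitone m) (a : ℕ) (b : Fin n) :
    a < m b ↔ (b : ℕ) < #{b | a < m b} := by
  have h := lower_eq_range ((Finset.univ.filter fun b => a < m b).image Fin.val) (by
    intro x hx x' hx'
    simp only [Finset.mem_image, Finset.mem_filter, Finset.mem_univ, true_and] at hx ⊢
    obtain ⟨y, hy, rfl⟩ := hx
    exact ⟨⟨x', lt_of_le_of_lt hx' y.2⟩, hy.trans_le (hm (by simpa [Fin.le_def] using hx')), rfl⟩)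
  rw [Finset.card_image_of_injective _ Fin.val_injective] at h
  rw [← Finset.mem_range (n := #{b | a < m b}), ← h]
  simp [Fin.val_inj]

theorem mu_eq {n : ℕ} {d d' : Fin n → Fin n} {g : Equiv.Perm (Fin n)}
    (h : Function.Injective (fun i => (rk d' (g i), d i))) (hQ : Qm d' = Qm d)
    (hd : Antitone (mu d)) (hd' : Antitone (mu d')) : mu d = mu d' := by
  funext b
  have key : ∀ a, a < mu d b ↔ a < mu d' b := by
    intro a
    rw [anti_lower _ hd, anti_lower _ hd', ← lam_rk d', ← lam_comp _ g,
      lam_eq (c := fun i => rk d' (g i)) h]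
    simp [CC_of_eq h hQ]
  exact le_antisymm (not_lt.1 fun hh => lt_irrefl _ ((key _).1 hh))
    (not_lt.1 fun hh => lt_irrefl _ ((key _).2 hh))

theorem eq_of_mu {n : ℕ} {d d' : Fin n → Fin n} (h : mu d = mu d') (hd : Monotone d)
    (hd' : Monotone d') : d = d' := by
  have e : ∀ b, Nonempty ({i // d i = b} ≃ {i // d' i = b}) := by
    intro b
    rw [← Fintype.card_eq, Fintype.card_subtype, Fintype.card_subtype]
    exact congrFun h b
  replace e := fun b => Classical.choice (e b)
  have hmap : ∀ i, d' (Equiv.ofFiberEquiv e i) = d i := Equiv.ofFiberEquiv_map e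
  have := Tuple.unique_monotone (f := d') (σ := Equiv.ofFiberEquiv e) (τ := 1)
    (by
      intro i j hij
      change d' (Equiv.ofFiberEquiv e i) ≤ d' (Equiv.ofFiberEquiv e j)
      rw [hmap, hmap]; exact hd hij) (by simpa using hd')
  funext i
  exact (hmap i).symm.trans (congrFun this i)

theorem ee_rk_one {n : ℕ} (d : Fin n → Fin n) : ee d (pc (yng (rk d))) = 1 := by
  apply ee_one _ _ (rk_inj d)
  intro g hg
  have hC := CC_of_eq hg rfl
  have : ∀ i, ∃ j, d j = d i ∧ rk d j = rk d (g i) := by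
    intro i
    rw [← mem_CC, CC_rk, ← hC, mem_CC]
    exact ⟨i, rfl, rfl⟩
  choose k hk1 hk2 using this
  have kinj : Function.Injective k := by
    intro i j hij
    apply hg
    refine Prod.ext ?_ ?_
    · show rk d (g i) = rk d (g j)
      rw [← hk2, ← hk2, hij]
    · show d i = d j
      rw [← hk1 i, hij, hk1]
  exact ⟨Equiv.ofBijective k (Finite.injective_iff_bijective.1 kinj), hk1, fun i => (hk2 i).symm⟩

theorem ee_rk_zero {n : ℕ} {d d' : Fin n → Fin n} (h : Qm d < Qm d') :
    ee d (pc (yng (rk d'))) = 0 := by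
  apply ee_zero
  intro g hg
  exact absurd (Qm_le hg) (by omega)

theorem ee_rk_zero' {n : ℕ} {d d' : Fin n → Fin n} (h : Qm d' = Qm d)
    (hd : Antitone (mu d)) (hd' : Antitone (mu d')) (md : Monotone d) (md' : Monotone d')
    (hne : d ≠ d') : ee d (pc (yng (rk d'))) = 0 := by
  apply ee_zero
  intro g hg
  exact hne (eq_of_mu (mu_eq hg h hd hd') md md')

open scoped Classical in
theorem ee_eq_zero {n : ℕ} {α : Type} (d : Fin n → α) (f : Equiv.Perm (Fin n) → ℂ) :
    ee d f = 0 ↔ ∑ g : Equiv.Perm (Fin n) with g ∈ yng d, sg g * f g = 0 := by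
  have hd : (Nat.card (yng d) : ℂ) ≠ 0 := by exact_mod_cast Nat.card_pos.ne'
  rw [ee_apply, mul_eq_zero, inv_eq_zero]
  simp [hd]

theorem ee_congr {n : ℕ} {α β : Type} (d : Fin n → α) (d' : Fin n → β) (h : yng d = yng d') :
    ee d = ee d' := by
  unfold ee
  rw [h]

theorem ee_conj {n : ℕ} {α : Type} (d : Fin n → α) (g : Equiv.Perm (Fin n))
    (f : Equiv.Perm (Fin n) → ℂ) (hf : IsCl f) (h : ee (fun i => d (g i)) f = 0) :
    ee d f = 0 := by
  classical
  rw [ee_eq_zero] at h ⊢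
  rw [← h]
  symm
  apply Finset.sum_bij (fun k _ => g * k * g⁻¹)
  · intro k hk
    simp only [Finset.mem_filter, Finset.mem_univ, true_and, mem_yng] at hk ⊢
    intro i
    have := hk (g⁻¹ i)
    simpa using this
  · intro a _ b _ hab
    simpa using hab
  · intro k hk
    simp only [Finset.mem_filter, Finset.mem_univ, true_and, mem_yng] at hk
    refine ⟨g⁻¹ * k * g, ?_, by group⟩
    simp only [Finset.mem_filter, Finset.mem_univ, true_and, mem_yng]
    intro i
    simpa using hk (g i)
  · intro k _
    rw [sg_conj, hf]

theorem mu_comp {n : ℕ} (c : Fin n → Fin n) (g : Equiv.Perm (Fin n)) :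
    mu (fun i => c (g i)) = mu c := by
  funext a
  apply Finset.card_bij (fun i _ => g i)
  · intro i hi; simpa using hi
  · intro i _ j _ hij; exact g.injective hij
  · intro i hi; exact ⟨g⁻¹ i, by simpa using hi, by simp⟩

theorem ee_all {n : ℕ} (f : Equiv.Perm (Fin n) → ℂ) (hf : IsCl f)
    (h : ∀ d : Fin n → Fin n, Monotone d → Antitone (mu d) → ee d f = 0)
    (d : Fin n → Fin n) : ee d f = 0 := by
  let r := Tuple.sort (fun b => -(mu d b : ℤ))
  have hr : Monotone ((fun b => -(mu d b : ℤ)) ∘ r) := Tuple.monotone_sort _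
  let d1 : Fin n → Fin n := fun i => r⁻¹ (d i)
  have hd1 : ∀ b, mu d1 b = mu d (r b) := by
    intro b
    simp only [mu, d1]
    congr 1
    ext i
    simp only [Finset.mem_filter, Finset.mem_univ, true_and]
    rw [Equiv.Perm.inv_eq_iff_eq]
  have h1 : yng d = yng d1 := by
    ext k
    simp [mem_yng, d1]
  rw [ee_congr d d1 h1]
  apply ee_conj d1 (Tuple.sort d1) f hf
  apply h
  · exact Tuple.monotone_sort d1
  · rw [mu_comp]
    intro a b hab
    have := hr hab
    simp only [Function.comp] at this
    rw [hd1, hd1]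
    omega

theorem cycleType_eq_of_sameCycle {n : ℕ} (σ τ : Equiv.Perm (Fin n))
    (h : ∀ i j, σ.SameCycle i j ↔ τ.SameCycle i j) : σ.cycleType = τ.cycleType := by
  classical
  have gen : ∀ σ : Equiv.Perm (Fin n), σ.cycleType =
      ((Finset.univ.filter (fun i => ∃ j, j ≠ i ∧ σ.SameCycle i j)).image
        (fun i => Finset.univ.filter (fun j => σ.SameCycle i j))).val.map Finset.card := by
    intro σ
    have e1 : (Finset.univ.filter (fun i => ∃ j, j ≠ i ∧ σ.SameCycle i j)).image
        (fun i => Finset.univ.filter (fun j => σ.SameCycle i j))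
        = σ.cycleFactorsFinset.image Equiv.Perm.support := by
      ext S
      simp only [Finset.mem_image, Finset.mem_filter, Finset.mem_univ, true_and]
      constructor
      · rintro ⟨i, ⟨j, hj, hij⟩, rfl⟩
        have hi : σ i ≠ i := by
          intro hi
          exact hj ((hij.eq_of_left hi).symm)
        refine ⟨σ.cycleOf i, Equiv.Perm.cycleOf_mem_cycleFactorsFinset_iff.2
          (Equiv.Perm.mem_support.2 hi), ?_⟩
        ext k
        rw [Equiv.Perm.mem_support_cycleOf_iff' hi]
        simp
      · rintro ⟨p, hp, rfl⟩
        have hc := (Equiv.Perm.mem_cycleFactorsFinset_iff.1 hp).1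
        obtain ⟨i, hi⟩ := hc.nonempty_support
        have hpi := Equiv.Perm.cycle_is_cycleOf hi hp
        have hi' : σ i ≠ i := Equiv.Perm.mem_support.1
          (Equiv.Perm.mem_cycleFactorsFinset_support_le hp hi)
        refine ⟨i, ⟨σ i, hi', Equiv.Perm.sameCycle_apply_right.2 (Equiv.Perm.SameCycle.refl _ _)⟩, ?_⟩
        rw [hpi]
        ext k
        rw [Equiv.Perm.mem_support_cycleOf_iff' hi']
        simp
    rw [e1, Finset.image_val_of_injOn, Multiset.map_map, Equiv.Perm.cycleType_def]
    intro p hp q hq hpq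
    have hc := (Equiv.Perm.mem_cycleFactorsFinset_iff.1 hp).1
    obtain ⟨i, hi⟩ := hc.nonempty_support
    rw [Equiv.Perm.cycle_is_cycleOf hi hp]
    have hpq' : p.support = q.support := hpq
    rw [hpq'] at hi
    rw [Equiv.Perm.cycle_is_cycleOf hi hq]
  rw [gen σ, gen τ]
  simp only [h]

open scoped Classical in
/-- number of pairs in the same cycle -/
noncomputable def mc {n : ℕ} (σ : Equiv.Perm (Fin n)) : ℕ :=
  #{p : Fin n × Fin n | σ.SameCycle p.1 p.2}

theorem nondeg {n : ℕ} (f : Equiv.Perm (Fin n) → ℂ) (hf : IsCl f)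
    (h : ∀ d : Fin n → Fin n, ee d f = 0) : ∀ (m : ℕ) (σ : Equiv.Perm (Fin n)), mc σ = m → f σ = 0 := by
  classical
  intro m
  induction m using Nat.strong_induction_on with
  | _ m ih =>
  intro σ hσ
  let d : Fin n → Fin n := fun i => (Quotient.mk (Equiv.Perm.SameCycle.setoid σ) i).out
  have hd : ∀ i j, d i = d j ↔ σ.SameCycle i j := by
    intro i j
    simp only [d, Quotient.out_inj]
    exact Quotient.eq
  have h1 := (ee_eq_zero d f).1 (h d)
  have hsub : ∀ k ∈ yng d, ∀ i j, k.SameCycle i j → σ.SameCycle i j := by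
    rintro k hk i j ⟨z, rfl⟩
    have := mem_yng.1 (zpow_mem hk z) i
    exact (hd _ _).1 this.symm
  have h2 : ∀ k ∈ yng d, sg k * f k = if mc k = m then sg σ * f σ else 0 := by
    intro k hk
    have hs : (Finset.univ.filter fun p : Fin n × Fin n => k.SameCycle p.1 p.2) ⊆
        (Finset.univ.filter fun p : Fin n × Fin n => σ.SameCycle p.1 p.2) := by
      intro p hp
      simp only [Finset.mem_filter, Finset.mem_univ, true_and] at hp ⊢
      exact hsub k hk _ _ hp
    have hle : mc k ≤ mc σ := Finset.card_le_card hs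
    split_ifs with hm
    · have heq := Finset.eq_of_subset_of_card_le hs (by
        change mc σ ≤ mc k
        omega)
      have hsc : ∀ i j, k.SameCycle i j ↔ σ.SameCycle i j := by
        intro i j
        have := Finset.ext_iff.1 heq (i, j)
        simpa using this
      have hconj := Equiv.Perm.isConj_iff_cycleType_eq.2 (cycleType_eq_of_sameCycle k σ hsc)
      obtain ⟨c, hc⟩ := isConj_iff.1 hconj
      rw [← hc, sg_conj, hf]
    · rw [ih (mc k) (by omega) k rfl, mul_zero]
  rw [Finset.sum_congr rfl (fun k hk => h2 k (by simpa using hk)), ← Finset.sum_filter,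
    Finset.sum_const, nsmul_eq_mul] at h1
  have hmem : σ ∈ Finset.filter (fun k => mc k = m) (Finset.univ.filter (fun g => g ∈ yng d)) := by
    simp only [Finset.mem_filter, Finset.mem_univ, true_and, hσ, and_true]
    intro i
    exact (hd _ _).2 (Equiv.Perm.sameCycle_apply_left.2 (Equiv.Perm.SameCycle.refl _ _))
  have hpos := Finset.card_pos.2 ⟨σ, hmem⟩
  have h3 := (mul_eq_zero.1 h1).resolve_left (by exact_mod_cast hpos.ne')
  exact (mul_eq_zero.1 h3).resolve_left (sg_ne σ)

open scoped Classical in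
theorem step {n : ℕ} (f : Equiv.Perm (Fin n) → ℂ) (hf : IsCl f)
    (hi : ∀ d : Fin n → Fin n, ∃ z : ℤ, ee d f = z) (q : ℕ) :
    ∃ g ∈ Submodule.span ℤ (Set.range (fun H : Subgroup (Equiv.Perm (Fin n)) => pc H)),
      IsCl (f - g) ∧ (∀ d : Fin n → Fin n, ∃ z : ℤ, ee d (f - g) = z) ∧
      ∀ d : Fin n → Fin n, Monotone d → Antitone (mu d) → Qm d < q → ee d (f - g) = 0 := by
  induction q with
  | zero => exact ⟨0, zero_mem _, by simpa using hf, by simpa using hi, by simp⟩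
  | succ q ih =>
    obtain ⟨g, hg, hcl, hint, hz⟩ := ih
    choose z hzz using hint
    let I : Finset (Fin n → Fin n) :=
      Finset.univ.filter (fun d => Monotone d ∧ Antitone (mu d) ∧ Qm d = q)
    let k : Equiv.Perm (Fin n) → ℂ := ∑ d ∈ I, z d • pc (yng (rk d))
    have hek : ∀ d : Fin n → Fin n, ee d k = ∑ d' ∈ I, (z d' : ℂ) * ee d (pc (yng (rk d'))) := by
      intro d
      simp only [k, map_sum]
      apply Finset.sum_congr rfl
      intro d' _
      rw [map_zsmul, zsmul_eq_mul]
    have hsub : f - (g + k) = (f - g) - k := by abel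
    refine ⟨g + k, add_mem hg (Submodule.sum_mem _ fun d _ => Submodule.smul_mem _ _
      (Submodule.subset_span ⟨_, rfl⟩)), ?_, ?_, ?_⟩
    · intro a b
      rw [hsub]
      change (f - g) (b * a * b⁻¹) - k (b * a * b⁻¹) = (f - g) a - k a
      rw [hcl a b]
      congr 1
      simp only [k, Finset.sum_apply, Pi.smul_apply]
      apply Finset.sum_congr rfl
      intro d _
      rw [pc_isCl]
    · intro d
      have hp : ∀ d', ∃ y : ℤ, ee d (pc (yng (rk d'))) = y := by
        intro d'
        rw [← prep_char]
        exact ee_int d _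
      choose y hy using hp
      refine ⟨z d - ∑ d' ∈ I, z d' * y d', ?_⟩
      rw [hsub, map_sub, hek, hzz]
      simp [hy]
    · intro d hm ha hq
      rw [hsub, map_sub, hek]
      rcases Nat.lt_succ_iff_lt_or_eq.1 hq with hq | hq
      · rw [hz d hm ha hq, Finset.sum_eq_zero, sub_zero]
        intro d' hd'
        simp only [I, Finset.mem_filter, Finset.mem_univ, true_and] at hd'
        rw [ee_rk_zero (by omega), mul_zero]
      · rw [Finset.sum_eq_single d, ee_rk_one, mul_one, hzz, sub_self]
        · intro d' hd' hne
          simp only [I, Finset.mem_filter, Finset.mem_univ, true_and] at hd'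
          rw [ee_rk_zero' (by omega) ha hd'.2.1 hm hd'.1 hne.symm, mul_zero]
        · intro hnd
          exact absurd (by simp [I, hm, ha, hq]) hnd

theorem main {n : ℕ} (f : Equiv.Perm (Fin n) → ℂ) (hf : IsCl f)
    (hi : ∀ d : Fin n → Fin n, ∃ z : ℤ, ee d f = z) :
    f ∈ Submodule.span ℤ (Set.range (fun H : Subgroup (Equiv.Perm (Fin n)) => pc H)) := by
  obtain ⟨g, hg, hcl, -, hz⟩ := step f hf hi
    ((∑ d : Fin n → Fin n, Qm d) + 1)
  have h0 : f - g = 0 := by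
    funext σ
    refine nondeg (f - g) hcl (ee_all _ hcl ?_) _ σ rfl
    intro d hm ha
    exact hz d hm ha (Nat.lt_succ_of_le
      (Finset.single_le_sum (f := fun d : Fin n → Fin n => Qm d) (fun _ _ => Nat.zero_le _)
        (Finset.mem_univ d)))
  rw [sub_eq_zero.1 h0]
  exact hg

end YoungProof

/-- The character of any finite-dimensional complex representation of the symmetric group
`G = Equiv.Perm (Fin n)` lies in the ℤ-span of the permutation characters
`g ↦ #{x ∈ G ⧸ H | g • x = x}`, where `H` ranges over the subgroups of `G`. -/
theorem stmt12 (n : ℕ) (V : FDRep ℂ (Equiv.Perm (Fin n))) :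
    V.character ∈ Submodule.span ℤ
      (Set.range fun H : Subgroup (Equiv.Perm (Fin n)) =>
        (fun g => (Nat.card {x : Equiv.Perm (Fin n) ⧸ H // g • x = x} : ℂ) :
          Equiv.Perm (Fin n) → ℂ)) := by
  refine YoungProof.main V.character ?_ ?_
  · intro g h
    exact V.char_conj g h
  · intro d
    exact YoungProof.ee_int d V.ρ
end
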